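/- For all integers n > p ≥ 0, Σ_{k=p+1}^{n} C(n,k) S(k,p+1) B_{n−k,p} = p^{n−1}(n − p·H_p)/p! + Σ_{j=1}^{p} S(n,p−j) H_j/j!, with the convention 0^0 = 1. -/

import Mathlib

/-- Stirling numbers of the second kind. -/
def stirling2 (n k : ℕ) : ℚ :=
  (1 / (Nat.factorial k : ℚ)) *
    ∑ j ∈ Finset.range (k + 1), (-1 : ℚ) ^ (k - j) * (Nat.choose k j : ℚ) * (j : ℚ) ^ n

/-- The `p`-Bernoulli numbers. -/
def pBernoulli (n p : ℕ) : ℚ :=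
  ∑ k ∈ Finset.range (n + 1),
    (-1 : ℚ) ^ k * stirling2 n k * ((Nat.choose (k + p + 1) k : ℚ))⁻¹ * (Nat.factorial k : ℚ)

/-- Harmonic numbers. -/
def harmonic' (n : ℕ) : ℚ := ∑ j ∈ Finset.Icc 1 n, (1 : ℚ) / (j : ℚ)

/-!
Expanding `B_{n-k,p}` and applying the convolution identity
`∑ C(n,m) S(m,a) S(n-m,b) = C(a+b,a) S(n,a+b)` cancels the binomial denominators, so the left-hand
side is `u n = ∑ (-1)^k k! S(n,k+p+1)`. The recurrence `S(n+1,i+1) = (i+1) S(n,i+1) + S(n,i)` makes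
`u (n+1) - p * u n` telescope to `S(n,p)`. The closed form on the right satisfies the same first
order recurrence with the same initial value `0`: this comes from summation by parts against
`H_j / j!` and from `∑ S(n,p-j) / j! = p^n / p!`.
-/

section StirlingSecond

open Finset Nat PowerSeries

theorem derivative_exp_sub_one_pow_succ (A : Type*) [CommRing A] [Algebra ℚ A] (k : ℕ) :
    d⁄dX A ((exp A - 1) ^ (k + 1)) = (k + 1 : A) • ((exp A - 1) ^ (k + 1) + (exp A - 1) ^ k) := by
  rw [derivative_pow, map_sub, derivative_exp, derivative_one, smul_eq_C_mul]
  push_cast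
  simp only [map_add, map_natCast, map_one]
  ring

theorem factorial_mul_coeff_exp_sub_one_pow (A : Type*) [CommRing A] [Algebra ℚ A] (n k : ℕ) :
    (n ! : A) * coeff n ((exp A - 1) ^ k) = k ! * stirlingSecond n k := by
  induction n generalizing k with
  | zero => cases k <;> simp
  | succ n ih =>
    cases k with
    | zero => simp [coeff_one]
    | succ k =>
      calc ((n + 1)! : A) * coeff (n + 1) ((exp A - 1) ^ (k + 1))
          = n ! * coeff n (d⁄dX A ((exp A - 1) ^ (k + 1))) := by
            rw [coeff_derivative, Nat.factorial_succ]
            push_cast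
            ring
        _ = (k + 1) *
            (n ! * coeff n ((exp A - 1) ^ (k + 1)) + n ! * coeff n ((exp A - 1) ^ k)) := by
            rw [derivative_exp_sub_one_pow_succ, coeff_smul, smul_eq_mul, map_add]
            ring
        _ = (k + 1)! * stirlingSecond (n + 1) (k + 1) := by
            rw [ih, ih, stirlingSecond_succ_succ, Nat.factorial_succ]
            push_cast
            ring

theorem stirling2_eq_stirlingSecond (n k : ℕ) : stirling2 n k = stirlingSecond n k := by
  have hcoeff : (n ! : ℚ) * coeff n ((exp ℚ - 1) ^ k) =
      ∑ j ∈ range (k + 1), (-1 : ℚ) ^ (k - j) * k.choose j * (j : ℚ) ^ n := by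
    rw [sub_eq_add_neg, add_pow, map_sum, mul_sum]
    refine sum_congr rfl fun j _ ↦ ?_
    have hsign : (-1 : ℚ⟦X⟧) ^ (k - j) * (k.choose j : ℚ⟦X⟧) =
        C ((-1) ^ (k - j) * (k.choose j : ℚ)) := by simp
    rw [mul_assoc, hsign, coeff_mul_C, exp_pow_eq_rescale_exp, coeff_rescale, coeff_exp]
    simp only [Algebra.algebraMap_self, RingHom.id_apply]
    field_simp
  rw [stirling2, ← hcoeff, factorial_mul_coeff_exp_sub_one_pow]
  field_simp

theorem sum_antidiagonal_choose_mul_stirlingSecond_mul_stirlingSecond (n a b : ℕ) :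
    ∑ x ∈ antidiagonal n, n.choose x.1 * stirlingSecond x.1 a * stirlingSecond x.2 b =
      (a + b).choose b * stirlingSecond n (a + b) := by
  have hfactorial : a ! * b ! *
      ∑ x ∈ antidiagonal n, n.choose x.1 * stirlingSecond x.1 a * stirlingSecond x.2 b =
        (a + b)! * stirlingSecond n (a + b) := by
    rify
    rw [← factorial_mul_coeff_exp_sub_one_pow ℝ, pow_add, coeff_mul, mul_sum, mul_sum]
    refine sum_congr rfl fun x hx ↦ ?_
    rw [← mem_antidiagonal.mp hx, ← Nat.add_choose_mul_factorial_mul_factorial, Nat.choose_symm_add]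
    push_cast
    linear_combination (-((x.1 + x.2).choose x.2 : ℝ)) *
      ((x.2 ! * coeff x.2 ((exp ℝ - 1) ^ b)) * factorial_mul_coeff_exp_sub_one_pow ℝ x.1 a +
        (a ! * stirlingSecond x.1 a) * factorial_mul_coeff_exp_sub_one_pow ℝ x.2 b)
  refine Nat.eq_of_mul_eq_mul_left (by positivity : 0 < a ! * b !) ?_
  rw [hfactorial, ← Nat.add_choose_mul_factorial_mul_factorial]
  ring

theorem sum_range_stirlingSecond_succ_mul {R : Type*} [CommRing R] (c : ℕ → R) (n p : ℕ) :
    ∑ j ∈ range (p + 1), (stirlingSecond (n + 1) (p - j) : R) * c j =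
      p * ∑ j ∈ range (p + 1), (stirlingSecond n (p - j) : R) * c j -
        ∑ j ∈ range p, (stirlingSecond n (p - (j + 1)) : R) * ((j + 1) * c (j + 1) - c j) := by
  have hshift : ∑ j ∈ range (p + 1), (j : R) * (stirlingSecond n (p - j) * c j) =
      ∑ j ∈ range p, (stirlingSecond n (p - (j + 1)) : R) * ((j + 1) * c (j + 1)) := by
    rw [sum_range_succ']
    push_cast
    simp only [zero_mul, add_zero]
    exact sum_congr rfl fun j _ ↦ by ring
  have hstep : ∀ j ∈ range p, (stirlingSecond (n + 1) (p - j) : R) * c j =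
      p * (stirlingSecond n (p - j) * c j) - j * (stirlingSecond n (p - j) * c j) +
        stirlingSecond n (p - (j + 1)) * c j := by
    intro j hj
    obtain ⟨i, rfl⟩ := Nat.exists_eq_add_of_lt (mem_range.mp hj)
    rw [show j + i + 1 - j = i + 1 by lia, show j + i + 1 - (j + 1) = i by lia,
      stirlingSecond_succ_succ]
    push_cast
    ring
  simp only [mul_sub, sum_sub_distrib]
  rw [← hshift, sum_range_succ, sum_congr rfl hstep, sum_add_distrib, sum_sub_distrib, ← mul_sum,
    sum_range_succ, sum_range_succ]
  simp only [Nat.sub_self, stirlingSecond_succ_zero, Nat.cast_zero]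
  ring

theorem sum_range_stirlingSecond_zero_mul {R : Type*} [Semiring R] (c : ℕ → R) (p : ℕ) :
    ∑ j ∈ range (p + 1), (stirlingSecond 0 (p - j) : R) * c j = c p := by
  rw [sum_range_succ, sum_eq_zero, Nat.sub_self, stirlingSecond_zero, Nat.cast_one, one_mul,
    zero_add]
  intro j hj
  rw [stirlingSecond_eq_zero_of_lt (Nat.sub_pos_of_lt (mem_range.mp hj)), Nat.cast_zero, zero_mul]

variable {K : Type*} [Field K] [CharZero K]

theorem sum_range_stirlingSecond_div_factorial (n p : ℕ) :
    ∑ j ∈ range (p + 1), (stirlingSecond n (p - j) : K) * (1 / j !) = p ^ n / p ! := by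
  induction n with
  | zero => rw [sum_range_stirlingSecond_zero_mul, pow_zero]
  | succ n ih =>
    have hweight (j : ℕ) : ((j : K) + 1) * (1 / (j + 1)!) - 1 / j ! = 0 := by
      rw [Nat.factorial_succ]
      push_cast
      field_simp [Nat.cast_add_one_ne_zero]
      ring
    rw [sum_range_stirlingSecond_succ_mul, ih]
    simp only [hweight, mul_zero, sum_const_zero]
    ring

theorem sum_range_stirlingSecond_succ_mul_harmonic_div_factorial (n p : ℕ) :
    ∑ j ∈ range (p + 1), (stirlingSecond (n + 1) (p - j) : ℚ) * (harmonic j / j !) =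
      p * ∑ j ∈ range (p + 1), (stirlingSecond n (p - j) : ℚ) * (harmonic j / j !) -
        p ^ n / p ! + stirlingSecond n p := by
  have hweight (j : ℕ) :
      ((j : ℚ) + 1) * (harmonic (j + 1) / (j + 1)!) - harmonic j / j ! = 1 / (j + 1)! := by
    rw [harmonic_succ, Nat.factorial_succ]
    push_cast
    field_simp
    ring
  rw [sum_range_stirlingSecond_succ_mul, ← sum_range_stirlingSecond_div_factorial,
    sum_range_succ' (fun j ↦ (stirlingSecond n (p - j) : ℚ) * (1 / j !))]
  simp only [hweight, Nat.sub_zero, Nat.factorial_zero, Nat.cast_one, div_one, mul_one]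
  ring

/-- The alternating sum `∑ₖ (-1)ᵏ k! S(n, k + p + 1)`, to which the convolution of Stirling numbers
with `p`-Bernoulli numbers reduces. The terms with `k ≥ n - p` vanish. -/
def alternatingStirlingSum (n p : ℕ) : ℤ :=
  ∑ k ∈ range (n + 1), (-1) ^ k * k ! * stirlingSecond n (k + p + 1)

theorem alternatingStirlingSum_zero (p : ℕ) : alternatingStirlingSum 0 p = 0 := by
  simp [alternatingStirlingSum]

theorem alternatingStirlingSum_succ (n p : ℕ) :
    alternatingStirlingSum (n + 1) p = p * alternatingStirlingSum n p + stirlingSecond n p := by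
  let g (k : ℕ) : ℤ := (-1) ^ k * k ! * stirlingSecond n (k + p)
  have hterm (k : ℕ) : (-1) ^ k * k ! * (stirlingSecond (n + 1) (k + p + 1) : ℤ) =
      p * ((-1) ^ k * k ! * stirlingSecond n (k + p + 1)) + (g k - g (k + 1)) := by
    simp only [g, stirlingSecond_succ_succ, Nat.factorial_succ, add_right_comm k 1 p]
    push_cast
    ring
  have hlast : stirlingSecond n (n + 1 + p + 1) = 0 := stirlingSecond_eq_zero_of_lt (by lia)
  have hboundary : stirlingSecond n (n + 2 + p) = 0 := stirlingSecond_eq_zero_of_lt (by lia)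
  rw [alternatingStirlingSum, sum_congr rfl fun k _ ↦ hterm k, sum_add_distrib, sum_range_sub',
    ← mul_sum, sum_range_succ, ← alternatingStirlingSum]
  simp [g, hlast, hboundary]

theorem alternatingStirlingSum_eq (n p : ℕ) :
    (alternatingStirlingSum n p : ℚ) =
      (n * (p : ℚ) ^ (n - 1) - p ^ n * harmonic p) / p ! +
        ∑ j ∈ range (p + 1), (stirlingSecond n (p - j) : ℚ) * (harmonic j / j !) := by
  induction n with
  | zero =>
    rw [alternatingStirlingSum_zero, sum_range_stirlingSecond_zero_mul]
    push_cast
    ring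
  | succ n ih =>
    have hpow : (p : ℚ) * (n * (p : ℚ) ^ (n - 1)) = n * p ^ n := by
      rcases eq_or_ne n 0 with rfl | hn
      · simp
      · rw [mul_left_comm, mul_pow_sub_one hn]
    rw [alternatingStirlingSum_succ, sum_range_stirlingSecond_succ_mul_harmonic_div_factorial,
      Nat.add_sub_cancel]
    push_cast
    rw [ih]
    linear_combination hpow / p !

end StirlingSecond

section PBernoulli

open Finset Nat

theorem harmonic'_eq_harmonic (n : ℕ) : harmonic' n = harmonic n := by
  simp only [harmonic', harmonic_eq_sum_Icc, one_div]

theorem pBernoulli_eq_sum_range_of_le {m N : ℕ} (p : ℕ) (h : m ≤ N) :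
    pBernoulli m p = ∑ k ∈ range (N + 1),
      (-1 : ℚ) ^ k * stirlingSecond m k * ((k + p + 1).choose k : ℚ)⁻¹ * k ! := by
  simp only [pBernoulli, stirling2_eq_stirlingSecond]
  refine sum_subset (range_mono (by lia)) fun k _ hk ↦ ?_
  rw [stirlingSecond_eq_zero_of_lt (by simpa using hk)]
  simp

theorem sum_antidiagonal_choose_mul_stirlingSecond_mul_pBernoulli (n p : ℕ) :
    ∑ x ∈ antidiagonal n, (n.choose x.1 : ℚ) * stirlingSecond x.1 (p + 1) * pBernoulli x.2 p =
      alternatingStirlingSum n p := by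
  have hconv (k : ℕ) : ∑ x ∈ antidiagonal n,
      (n.choose x.1 : ℚ) * stirlingSecond x.1 (p + 1) * stirlingSecond x.2 k =
        (k + p + 1).choose k * stirlingSecond n (k + p + 1) := by
    rw [add_assoc, add_comm k]
    exact_mod_cast sum_antidiagonal_choose_mul_stirlingSecond_mul_stirlingSecond n (p + 1) k
  calc
    _ = ∑ x ∈ antidiagonal n, ∑ k ∈ range (n + 1),
          (-1 : ℚ) ^ k * k ! * ((k + p + 1).choose k : ℚ)⁻¹ *
            (n.choose x.1 * stirlingSecond x.1 (p + 1) * stirlingSecond x.2 k) := by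
        refine sum_congr rfl fun x hx ↦ ?_
        rw [pBernoulli_eq_sum_range_of_le p (HasAntidiagonal.antidiagonal.snd_le hx), mul_sum]
        exact sum_congr rfl fun k _ ↦ by ring
    _ = ∑ k ∈ range (n + 1), (-1 : ℚ) ^ k * k ! * stirlingSecond n (k + p + 1) := by
        rw [sum_comm]
        refine sum_congr rfl fun k _ ↦ ?_
        have hchoose : ((k + p + 1).choose k : ℚ) ≠ 0 :=
          Nat.cast_ne_zero.mpr (Nat.choose_pos (by lia)).ne'
        rw [← mul_sum, hconv, mul_assoc, inv_mul_cancel_left₀ hchoose]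
    _ = _ := by
        rw [alternatingStirlingSum]
        push_cast
        rfl

theorem sum_Icc_choose_mul_stirling2_mul_pBernoulli (n p : ℕ) :
    ∑ k ∈ Icc (p + 1) n, (n.choose k : ℚ) * stirling2 k (p + 1) * pBernoulli (n - k) p =
      alternatingStirlingSum n p := by
  rw [← sum_antidiagonal_choose_mul_stirlingSecond_mul_pBernoulli,
    Finset.Nat.sum_antidiagonal_eq_sum_range_succ_mk]
  simp only [stirling2_eq_stirlingSecond]
  refine sum_subset (fun k hk ↦ mem_range_succ_iff.mpr (mem_Icc.mp hk).2) fun k hk hk' ↦ ?_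
  have hkp : k < p + 1 := not_le.mp fun hpk ↦ hk' (mem_Icc.mpr ⟨hpk, mem_range_succ_iff.mp hk⟩)
  simp only [stirlingSecond_eq_zero_of_lt hkp, Nat.cast_zero, mul_zero, zero_mul]

theorem sum_Icc_stirling2_mul_harmonic' (n p : ℕ) :
    ∑ j ∈ Icc 1 p, stirling2 n (p - j) * harmonic' j / (j ! : ℚ) =
      ∑ j ∈ range (p + 1), (stirlingSecond n (p - j) : ℚ) * (harmonic j / j !) := by
  rw [sum_range_succ', harmonic_zero, zero_div, mul_zero, add_zero, range_eq_Ico,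
    sum_Ico_add' (fun j ↦ (stirlingSecond n (p - j) : ℚ) * (harmonic j / j !)), zero_add,
    Ico_add_one_right_eq_Icc]
  simp only [stirling2_eq_stirlingSecond, harmonic'_eq_harmonic, mul_div_assoc]

end PBernoulli

theorem sum_stirling2_pBernoulli_general (n p : ℕ) (hn : n ≠ 0) :
    ∑ k ∈ Finset.Icc (p + 1) n, (Nat.choose n k : ℚ) * stirling2 k (p + 1) * pBernoulli (n - k) p =
      (p : ℚ) ^ (n - 1) * ((n : ℚ) - (p : ℚ) * harmonic' p) / (Nat.factorial p : ℚ) +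
        ∑ j ∈ Finset.Icc 1 p, stirling2 n (p - j) * harmonic' j / (Nat.factorial j : ℚ) := by
  rw [sum_Icc_choose_mul_stirling2_mul_pBernoulli, alternatingStirlingSum_eq,
    sum_Icc_stirling2_mul_harmonic', harmonic'_eq_harmonic, ← mul_pow_sub_one hn (p : ℚ)]
  ring

theorem sum_stirling2_pBernoulli (n p : ℕ) (h : p < n) :
    ∑ k ∈ Finset.Icc (p + 1) n, (Nat.choose n k : ℚ) * stirling2 k (p + 1) * pBernoulli (n - k) p =
      (p : ℚ) ^ (n - 1) * ((n : ℚ) - (p : ℚ) * harmonic' p) / (Nat.factorial p : ℚ) +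
        ∑ j ∈ Finset.Icc 1 p, stirling2 n (p - j) * harmonic' j / (Nat.factorial j : ℚ) :=
  sum_stirling2_pBernoulli_general n p (Nat.ne_zero_of_lt h)
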